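/- (Tempesta–Tondo conjecture) Let n ≥ 2 and let L, M be smooth operator fields on ℝⁿ such that for every x the matrices L(x) and M(x) are strictly upper triangular and commute: L(x)·M(x) = M(x)·L(x). Then the generalized Haantjes bracket of level n − 1 vanishes identically: H^{(n−1)}_{L,M}(ξ, η)(x) = 0 for all smooth vector fields ξ, η on ℝⁿ and all x. -/

import Mathlib

/-!
At each point `x` the bracket `genB L M m ξ η` depends only on the values `ξ x` and `η x`: the
derivatives of `ξ` and `η` cancel in the Frölicher–Nijenhuis bracket (`fnB_eq`), and the recursion
preserves this (`genB_eq`). The problem is therefore one about an alternating bilinear map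
`bil x m` on `ℝⁿ`, built from the matrices `L x`, `M x` and their directional derivatives, all of
which are strictly upper triangular.

Let `V k` be the span of the first `k` basis vectors, so that strictly upper triangular matrices
map `V k` into `V (k - 1)`. The Frölicher–Nijenhuis bracket maps `V i × V j` into
`V (max i j - 1)`, and even into `V (max i j - 2)` if `min i j = 1`, as `L` and `M` kill `V 1`.
By induction, the bracket of level `m + 1` maps `V i × V j` into
`V (min (min i j) (m + 2) + max i j - 2 * m - 3)` (`bil_mem_flag`). For `m = n - 2` and
`(i, j) = (n - 1, n)` the last index is `0`, so the bracket vanishes on `V (n - 1) × V n`.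
An alternating map on `ℝⁿ` vanishing there vanishes identically, because `V (n - 1)` is a hyperplane.
The commutation of `L x` and `M x` plays no role in this argument.
-/

open Matrix

/-- A vector field on ℝⁿ. -/
abbrev Vec (n : ℕ) := Fin n → ℝ
abbrev VF (n : ℕ) := Vec n → Vec n
abbrev OpField (n : ℕ) := Vec n → Matrix (Fin n) (Fin n) ℝ

/-- Smooth (C^∞) vector field. -/
def SmoothVF {n : ℕ} (ξ : VF n) : Prop := ContDiff ℝ (⊤ : ℕ∞) ξ

/-- Smooth (C^∞) operator field, entrywise. -/
def SmoothOp {n : ℕ} (L : OpField n) : Prop :=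
  ∀ i j : Fin n, ContDiff ℝ (⊤ : ℕ∞) fun x => L x i j

/-- Lie bracket of vector fields. -/
noncomputable def lieB {n : ℕ} (ξ η : VF n) : VF n :=
  fun x => fderiv ℝ η x (ξ x) - fderiv ℝ ξ x (η x)

/-- Pointwise action of an operator field on a vector field. -/
def app {n : ℕ} (L : OpField n) (ξ : VF n) : VF n := fun x => (L x).mulVec (ξ x)

/-- Nijenhuis torsion. -/
noncomputable def nijTor {n : ℕ} (L : OpField n) (ξ η : VF n) : VF n :=
  app L (app L (lieB ξ η)) + lieB (app L ξ) (app L η)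
    - app L (lieB (app L ξ) η) - app L (lieB ξ (app L η))

/-- Generalized Haantjes torsion: `genTor L m` is the torsion of level `m + 1`,
so `genTor L 0` is the Nijenhuis torsion `T^{(1)}_L` and `genTor L (m-1) = T^{(m)}_L`. -/
noncomputable def genTor {n : ℕ} (L : OpField n) : ℕ → VF n → VF n → VF n
  | 0 => nijTor L
  | m + 1 => fun ξ η =>
      app L (app L (genTor L m ξ η)) + genTor L m (app L ξ) (app L η)
        - app L (genTor L m (app L ξ) η) - app L (genTor L m ξ (app L η))

/-- The Haantjes torsion `H_L = T^{(2)}_L`. -/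
noncomputable def haantjes {n : ℕ} (L : OpField n) : VF n → VF n → VF n := genTor L 1

/-- Frölicher–Nijenhuis bracket of two operator fields. -/
noncomputable def fnB {n : ℕ} (K L : OpField n) (ξ η : VF n) : VF n :=
  lieB (app K ξ) (app L η) + lieB (app L ξ) (app K η)
    - app L (lieB (app K ξ) η) - app L (lieB ξ (app K η))
    - app K (lieB (app L ξ) η) - app K (lieB ξ (app L η))
    + app L (app K (lieB ξ η)) + app K (app L (lieB ξ η))

/-- Generalized Haantjes bracket: `genB K L m` is the bracket of level `m + 1`,
so `genB K L 0 = [[K,L]]` and `genB K L (m-1) = H^{(m)}_{K,L}`. -/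
noncomputable def genB {n : ℕ} (K L : OpField n) : ℕ → VF n → VF n → VF n
  | 0 => fnB K L
  | m + 1 => fun ξ η =>
      app K (app L (genB K L m ξ η)) + genB K L m (app K ξ) (app L η)
        - app L (genB K L m (app K ξ) η) - app K (genB K L m ξ (app L η))
        + app L (app K (genB K L m ξ η)) + genB K L m (app L ξ) (app K η)
        - app K (genB K L m (app L ξ) η) - app L (genB K L m ξ (app K η))

/-- Upper triangular matrix. -/
def UpperTri {n : ℕ} (A : Matrix (Fin n) (Fin n) ℝ) : Prop :=
  ∀ i j : Fin n, j < i → A i j = 0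

/-- Strictly upper triangular matrix. -/
def StrictUpperTri {n : ℕ} (A : Matrix (Fin n) (Fin n) ℝ) : Prop :=
  ∀ i j : Fin n, j ≤ i → A i j = 0

/-- Jacobian matrix of a map `f : ℝⁿ → ℝⁿ` at a point. -/
noncomputable def jacobianMatrix {n : ℕ} (f : VF n) (x : Vec n) :
    Matrix (Fin n) (Fin n) ℝ :=
  Matrix.of fun i j => fderiv ℝ f x (Pi.single j 1) i

/-- `L` is locally reducible, near `p`, to a form whose matrix satisfies `P`
(e.g. upper triangularity) in suitable local coordinates: there are an open
neighbourhood `U` of `p` and a smooth diffeomorphism `φ` from `U` onto an open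
set, with smooth inverse `ψ`, such that the pushforward operator field
`y ↦ Dφ(φ⁻¹ y) · L(φ⁻¹ y) · (Dφ(φ⁻¹ y))⁻¹ = Dφ(ψ y) · L(ψ y) · Dψ(y)`
satisfies `P` at every point of `φ '' U`. -/
def LocallyReducible {n : ℕ} (L : OpField n) (p : Vec n)
    (P : Matrix (Fin n) (Fin n) ℝ → Prop) : Prop :=
  ∃ U : Set (Vec n), IsOpen U ∧ p ∈ U ∧
    ∃ φ ψ : VF n,
      ContDiffOn ℝ (⊤ : ℕ∞) φ U ∧ IsOpen (φ '' U) ∧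
      ContDiffOn ℝ (⊤ : ℕ∞) ψ (φ '' U) ∧
      (∀ x ∈ U, ψ (φ x) = x) ∧ (∀ y ∈ φ '' U, φ (ψ y) = y) ∧
      ∀ y ∈ φ '' U, P (jacobianMatrix φ (ψ y) * L (ψ y) * jacobianMatrix ψ y)

/-! ### The filtration and strictly upper triangular matrices -/

/-- The subspace `V k` of vectors whose coordinates vanish from index `k` on (indices start at
`0`), i.e. the span of the first `k` basis vectors. Integer indices make `V k = 0` for `k ≤ 0`
and spare truncated subtraction. -/
def flag (n : ℕ) (k : ℤ) : Submodule ℝ (Vec n) where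
  carrier := {u | ∀ a : Fin n, k ≤ (a : ℤ) → u a = 0}
  add_mem' := by
    intro u v hu hv a ha
    simp [hu a ha, hv a ha]
  zero_mem' := by
    intro a _
    rfl
  smul_mem' := by
    intro c u hu a ha
    simp [hu a ha]

lemma mem_flag {n : ℕ} {k : ℤ} {u : Vec n} :
    u ∈ flag n k ↔ ∀ a : Fin n, k ≤ (a : ℤ) → u a = 0 := Iff.rfl

lemma flag_mono {n : ℕ} {k l : ℤ} (h : k ≤ l) {u : Vec n} (hu : u ∈ flag n k) : u ∈ flag n l :=
  fun a ha => hu a (h.trans ha)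

lemma eq_zero_of_mem_flag {n : ℕ} {k : ℤ} (h : k ≤ 0) {u : Vec n} (hu : u ∈ flag n k) :
    u = 0 := by
  funext a
  exact hu a (by omega)

lemma mem_flag_top {n : ℕ} (u : Vec n) : u ∈ flag n n := by
  intro a ha
  have := a.2
  omega

lemma StrictUpperTri.mulVec_mem {n : ℕ} {A : Matrix (Fin n) (Fin n) ℝ} (hA : StrictUpperTri A)
    {k : ℤ} {u : Vec n} (hu : u ∈ flag n k) : A.mulVec u ∈ flag n (k - 1) := by
  intro a ha
  rw [Matrix.mulVec, dotProduct]
  refine Finset.sum_eq_zero fun b _ => ?_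
  by_cases hb : b ≤ a
  · rw [hA a b hb, zero_mul]
  · rw [hu b (by rw [not_le, Fin.lt_def] at hb; omega), mul_zero]

/-! ### Tensoriality -/

/-- The directional derivative `∂_u L` of an operator field at `x`, entrywise, as a linear
function of the direction `u`. -/
noncomputable def dOp {n : ℕ} (L : OpField n) (x : Vec n) :
    Vec n →ₗ[ℝ] Matrix (Fin n) (Fin n) ℝ where
  toFun u := Matrix.of fun i j => fderiv ℝ (fun y => L y i j) x u
  map_add' u v := by
    ext i j
    simp
  map_smul' c u := by
    ext i j
    simp

lemma dOp_strictUpperTri {n : ℕ} {L : OpField n} (hL : ∀ x, StrictUpperTri (L x)) (x u : Vec n) :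
    StrictUpperTri (dOp L x u) := by
  intro i j hij
  have h : (fun y => L y i j) = fun _ => 0 := funext fun y => hL y i j hij
  simp [dOp, h]

lemma app_apply {n : ℕ} (L : OpField n) (ξ : VF n) (x : Vec n) :
    app L ξ x = (L x).mulVec (ξ x) := rfl

lemma SmoothOp.app {n : ℕ} {L : OpField n} (hL : SmoothOp L) {ξ : VF n} (hξ : SmoothVF ξ) :
    SmoothVF (app L ξ) := by
  refine contDiff_pi.2 fun i => ?_
  simp only [_root_.app, Matrix.mulVec, dotProduct]
  exact ContDiff.sum fun j _ => (hL i j).mul (contDiff_pi.1 hξ j)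

lemma fderiv_app {n : ℕ} {L : OpField n} (hL : SmoothOp L) {ξ : VF n} (hξ : SmoothVF ξ)
    (x u : Vec n) :
    fderiv ℝ (app L ξ) x u = (dOp L x u).mulVec (ξ x) + (L x).mulVec (fderiv ℝ ξ x u) := by
  have hξd : DifferentiableAt ℝ ξ x := (ContDiff.differentiable hξ (by simp)).differentiableAt
  have hLd : ∀ i j, DifferentiableAt ℝ (fun y => L y i j) x := fun i j =>
    ((hL i j).differentiable (by simp)).differentiableAt
  have hξj : ∀ j, HasFDerivAt (fun y => ξ y j)
      ((ContinuousLinearMap.proj j).comp (fderiv ℝ ξ x)) x :=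
    fun j => hasFDerivAt_pi'.1 hξd.hasFDerivAt j
  have h : HasFDerivAt (app L ξ) (ContinuousLinearMap.pi fun i => ∑ j,
      (L x i j • (ContinuousLinearMap.proj j).comp (fderiv ℝ ξ x)
        + ξ x j • fderiv ℝ (fun y => L y i j) x)) x := by
    refine hasFDerivAt_pi.2 fun i => ?_
    simp only [app, Matrix.mulVec, dotProduct]
    exact HasFDerivAt.fun_sum fun j _ => (hLd i j).hasFDerivAt.fun_mul (hξj j)
  rw [h.fderiv]
  funext i
  simp [Matrix.mulVec, dotProduct, dOp, Finset.sum_add_distrib, mul_comm, add_comm]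

/-- The value of the Frölicher–Nijenhuis bracket of `K` and `L` at `x` on the constant vector
fields `u` and `v`, as a bilinear map. -/
noncomputable def bilBase {n : ℕ} (K L : OpField n) (x : Vec n) :
    Vec n →ₗ[ℝ] Vec n →ₗ[ℝ] Vec n :=
  LinearMap.mk₂ ℝ (fun u v =>
    (dOp L x ((K x).mulVec u)).mulVec v - (dOp K x ((L x).mulVec v)).mulVec u
    + (dOp K x ((L x).mulVec u)).mulVec v - (dOp L x ((K x).mulVec v)).mulVec u
    + (L x).mulVec ((dOp K x v).mulVec u) - (L x).mulVec ((dOp K x u).mulVec v)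
    + (K x).mulVec ((dOp L x v).mulVec u) - (K x).mulVec ((dOp L x u).mulVec v))
    (by intros; simp only [Matrix.mulVec_add, map_add, Matrix.add_mulVec]; abel)
    (by intros; simp only [Matrix.mulVec_smul, map_smul, Matrix.smul_mulVec]; module)
    (by intros; simp only [Matrix.mulVec_add, map_add, Matrix.add_mulVec]; abel)
    (by intros; simp only [Matrix.mulVec_smul, map_smul, Matrix.smul_mulVec]; module)

/-- The recursion step of the generalized Haantjes brackets, for bilinear maps on `ℝⁿ`. -/
noncomputable def bilStep {n : ℕ} (A B : Matrix (Fin n) (Fin n) ℝ)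
    (T : Vec n →ₗ[ℝ] Vec n →ₗ[ℝ] Vec n) : Vec n →ₗ[ℝ] Vec n →ₗ[ℝ] Vec n :=
  LinearMap.mk₂ ℝ (fun u v =>
    A.mulVec (B.mulVec (T u v)) + T (A.mulVec u) (B.mulVec v)
      - B.mulVec (T (A.mulVec u) v) - A.mulVec (T u (B.mulVec v))
      + B.mulVec (A.mulVec (T u v)) + T (B.mulVec u) (A.mulVec v)
      - A.mulVec (T (B.mulVec u) v) - B.mulVec (T u (A.mulVec v)))
    (by intros; simp only [Matrix.mulVec_add, map_add, LinearMap.add_apply]; abel)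
    (by intros; simp only [Matrix.mulVec_smul, map_smul, LinearMap.smul_apply]; module)
    (by intros; simp only [Matrix.mulVec_add, map_add]; abel)
    (by intros; simp only [Matrix.mulVec_smul, map_smul]; module)

/-- The value at `x` of the generalized Haantjes bracket of level `m + 1`, as a bilinear map. -/
noncomputable def bil {n : ℕ} (K L : OpField n) (x : Vec n) :
    ℕ → (Vec n →ₗ[ℝ] Vec n →ₗ[ℝ] Vec n)
  | 0 => bilBase K L x
  | m + 1 => bilStep (K x) (L x) (bil K L x m)

/-- The Frölicher–Nijenhuis bracket is tensorial: by the Leibniz rule, the terms differentiating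
`ξ` or `η` cancel. -/
lemma fnB_eq {n : ℕ} {K L : OpField n} (hK : SmoothOp K) (hL : SmoothOp L) {ξ η : VF n}
    (hξ : SmoothVF ξ) (hη : SmoothVF η) (x : Vec n) :
    fnB K L ξ η x = bilBase K L x (ξ x) (η x) := by
  simp only [fnB, Pi.add_apply, Pi.sub_apply, bilBase, LinearMap.mk₂_apply, lieB, app_apply,
    fderiv_app hK hξ, fderiv_app hL hξ, fderiv_app hK hη, fderiv_app hL hη,
    Matrix.mulVec_add, Matrix.mulVec_sub]
  abel

lemma genB_eq {n : ℕ} {K L : OpField n} (hK : SmoothOp K) (hL : SmoothOp L) (m : ℕ) {ξ η : VF n}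
    (hξ : SmoothVF ξ) (hη : SmoothVF η) (x : Vec n) :
    genB K L m ξ η x = bil K L x m (ξ x) (η x) := by
  induction m generalizing ξ η with
  | zero => exact fnB_eq hK hL hξ hη x
  | succ m ih =>
    simp only [genB, bil, bilStep, LinearMap.mk₂_apply, Pi.add_apply, Pi.sub_apply, app_apply,
      ih hξ hη, ih (hK.app hξ) (hL.app hη), ih (hL.app hξ) (hK.app hη), ih (hK.app hξ) hη,
      ih (hL.app hξ) hη, ih hξ (hK.app hη), ih hξ (hL.app hη)]

lemma bil_antisymm {n : ℕ} (K L : OpField n) (x : Vec n) (m : ℕ) (u v : Vec n) :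
    bil K L x m u v = -bil K L x m v u := by
  induction m generalizing u v with
  | zero =>
    simp only [bil, bilBase, LinearMap.mk₂_apply]
    abel
  | succ m ih =>
    simp only [bil, bilStep, LinearMap.mk₂_apply]
    rw [ih u v, ih ((K x).mulVec u), ih ((L x).mulVec u), ih ((K x).mulVec u) v,
      ih ((L x).mulVec u) v, ih u, ih u ((K x).mulVec v)]
    simp only [Matrix.mulVec_neg]
    abel

/-! ### Estimates along the filtration -/

section Flag

variable {n : ℕ} {K L : OpField n}

lemma bilBase_mem_flag (hK : ∀ x, StrictUpperTri (K x)) (hL : ∀ x, StrictUpperTri (L x))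
    (x : Vec n) {k : ℤ} {u v : Vec n} (hu : u ∈ flag n k) (hv : v ∈ flag n k) :
    bilBase K L x u v ∈ flag n (k - 1) := by
  have hdK := dOp_strictUpperTri hK x
  have hdL := dOp_strictUpperTri hL x
  have down : ∀ {w : Vec n}, w ∈ flag n (k - 1 - 1) → w ∈ flag n (k - 1) :=
    fun h => flag_mono (by omega) h
  rw [bilBase, LinearMap.mk₂_apply]
  refine sub_mem (add_mem (sub_mem (add_mem (sub_mem (add_mem (sub_mem ?_ ?_) ?_) ?_) ?_) ?_) ?_) ?_
  · exact (hdL _).mulVec_mem hv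
  · exact (hdK _).mulVec_mem hu
  · exact (hdK _).mulVec_mem hv
  · exact (hdL _).mulVec_mem hu
  · exact down ((hL x).mulVec_mem ((hdK _).mulVec_mem hu))
  · exact down ((hL x).mulVec_mem ((hdK _).mulVec_mem hv))
  · exact down ((hK x).mulVec_mem ((hdL _).mulVec_mem hu))
  · exact down ((hK x).mulVec_mem ((hdL _).mulVec_mem hv))

/-- The gain of one more step when the first argument is a multiple of the first basis vector,
which is killed by every strictly upper triangular matrix. -/
lemma bilBase_mem_flag_of_one (hK : ∀ x, StrictUpperTri (K x)) (hL : ∀ x, StrictUpperTri (L x))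
    (x : Vec n) {k : ℤ} {u v : Vec n} (hu : u ∈ flag n 1) (hv : v ∈ flag n k) :
    bilBase K L x u v ∈ flag n (k - 1 - 1) := by
  have hdK := dOp_strictUpperTri hK x
  have hdL := dOp_strictUpperTri hL x
  have kill : ∀ {A : Matrix (Fin n) (Fin n) ℝ}, StrictUpperTri A → A.mulVec u = 0 :=
    fun hA => eq_zero_of_mem_flag (by norm_num) (hA.mulVec_mem hu)
  rw [bilBase, LinearMap.mk₂_apply, kill (hK x), kill (hL x), kill (hdK _), kill (hdL _),
    kill (hdK _), kill (hdL _)]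
  simp only [map_zero, Matrix.zero_mulVec, Matrix.mulVec_zero, sub_zero, add_zero, zero_sub]
  exact sub_mem (neg_mem ((hL x).mulVec_mem ((hdK _).mulVec_mem hv)))
    ((hK x).mulVec_mem ((hdL _).mulVec_mem hv))

/-- The filtration estimate. In the recursion step, put `c = min (min i j) (m + 3) + max i j`.
A matrix applied outside lowers the index by one. A matrix applied to one argument lowers `i` or `j`
by one, and then `min (min i j) (m + 2) + max i j` is at most `c - 1`; applying one to each argument
makes it exactly `c - 2`. So all terms stay below the index claimed at level `m + 1`. -/
lemma bil_mem_flag (hK : ∀ x, StrictUpperTri (K x)) (hL : ∀ x, StrictUpperTri (L x))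
    (x : Vec n) (m : ℕ) {i j : ℤ} {u v : Vec n} (hu : u ∈ flag n i) (hv : v ∈ flag n j) :
    bil K L x m u v ∈ flag n (min (min i j) (m + 2) + max i j - 2 * m - 3) := by
  induction m generalizing i j u v with
  | zero =>
    rcases le_or_gt (min i j) 0 with h0 | h0
    · have : bil K L x 0 u v = 0 := by
        rcases min_le_iff.1 h0 with h | h
        · simp [eq_zero_of_mem_flag h hu]
        · simp [eq_zero_of_mem_flag h hv]
      rw [this]
      exact zero_mem _
    · rcases le_or_gt (min i j) 1 with h1 | h1
      · rcases min_le_iff.1 h1 with h | h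
        · exact flag_mono (by omega) (bilBase_mem_flag_of_one hK hL x (flag_mono h hu) hv)
        · rw [bil_antisymm]
          exact neg_mem
            (flag_mono (by omega) (bilBase_mem_flag_of_one hK hL x (flag_mono h hv) hu))
      · exact flag_mono (by omega) (bilBase_mem_flag hK hL x
          (flag_mono (le_max_left i j) hu) (flag_mono (le_max_right i j) hv))
  | succ m ih =>
    have hKu := (hK x).mulVec_mem hu
    have hLu := (hL x).mulVec_mem hu
    have hKv := (hK x).mulVec_mem hv
    have hLv := (hL x).mulVec_mem hv
    rw [bil, bilStep, LinearMap.mk₂_apply]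
    push_cast
    refine sub_mem (sub_mem (add_mem (add_mem (sub_mem (sub_mem (add_mem
      ?_ ?_) ?_) ?_) ?_) ?_) ?_) ?_
    · exact flag_mono (by omega) ((hK x).mulVec_mem ((hL x).mulVec_mem (ih hu hv)))
    · exact flag_mono (by omega) (ih hKu hLv)
    · exact flag_mono (by omega) ((hL x).mulVec_mem (ih hKu hv))
    · exact flag_mono (by omega) ((hK x).mulVec_mem (ih hu hLv))
    · exact flag_mono (by omega) ((hL x).mulVec_mem ((hK x).mulVec_mem (ih hu hv)))
    · exact flag_mono (by omega) (ih hLu hKv)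
    · exact flag_mono (by omega) ((hK x).mulVec_mem (ih hLu hv))
    · exact flag_mono (by omega) ((hL x).mulVec_mem (ih hu hKv))

lemma bil_eq_zero (hn : 2 ≤ n) (hK : ∀ x, StrictUpperTri (K x)) (hL : ∀ x, StrictUpperTri (L x))
    (x u v : Vec n) : bil K L x (n - 2) u v = 0 := by
  have hyper : ∀ {w z : Vec n}, w ∈ flag n (n - 1) → bil K L x (n - 2) w z = 0 := fun hw =>
    eq_zero_of_mem_flag (by omega) (bil_mem_flag hK hL x (n - 2) hw (mem_flag_top _))
  have self : bil K L x (n - 2) v v = 0 := self_eq_neg.1 (bil_antisymm K L x (n - 2) v v)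
  have hyper_of_last : ∀ {w : Vec n}, w ⟨n - 1, by omega⟩ = 0 → w ∈ flag n (n - 1) := by
    intro w hw a ha
    have : a = ⟨n - 1, by omega⟩ := Fin.ext (by simp only; omega)
    rw [this, hw]
  by_cases hv : v ⟨n - 1, by omega⟩ = 0
  · rw [bil_antisymm, hyper (hyper_of_last hv), neg_zero]
  · -- Subtracting a multiple of `v` moves `u` into the hyperplane without changing the value.
    set c := u ⟨n - 1, by omega⟩ / v ⟨n - 1, by omega⟩ with hc
    have hw : u - c • v ∈ flag n (n - 1) := hyper_of_last (by simp [hc, hv])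
    have h := hyper (z := v) hw
    simpa [self] using h

end Flag

/-- Tempesta–Tondo conjecture: for commuting strictly upper
triangular operator fields `L, M` on ℝⁿ, the generalized Haantjes bracket of
level `n - 1` (i.e. `genB L M (n - 2)`) vanishes identically. -/
theorem stmt_2 (n : ℕ) (hn : 2 ≤ n) (L M : OpField n)
    (hL : SmoothOp L) (hM : SmoothOp M)
    (hLt : ∀ x : Vec n, StrictUpperTri (L x)) (hMt : ∀ x : Vec n, StrictUpperTri (M x))
    (hcomm : ∀ x : Vec n, L x * M x = M x * L x) :
    ∀ ξ η : VF n, SmoothVF ξ → SmoothVF η →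
      ∀ x : Vec n, genB L M (n - 2) ξ η x = 0 := by
  intro ξ η hξ hη x
  rw [genB_eq hL hM (n - 2) hξ hη x]
  exact bil_eq_zero hn hLt hMt x _ _
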